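/- Let I_ph, I_o, A, R_s, G_sh > 0 and let I : ℝ → ℝ be the SDM solution function. Then the short-circuit current I_sc := I(0) is strictly positive, and there exists a unique V_oc > 0 (the open-circuit voltage) with I(V_oc) = 0. -/

import Mathlib

/-!
For a fixed voltage `V`, write the SDM equation as `Iph = f (V + Rs * I) + I`, where `f` is the
current through the diode and the shunt. The right-hand side is strictly increasing in `I` and
equals `f V` at `I = 0`, so comparing `I` with `0` amounts to comparing `Iph` with `f V`. Hence
`0 < I 0` because `f 0 = 0 < Iph`, and the open-circuit voltages are the solutions of
`f V = Iph`, an equation in which the series resistance no longer appears.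
-/

open Filter

section Monotone

theorem existsUnique_gt_and_eq_of_strictMono {α β : Type*} [LinearOrder α] [TopologicalSpace α]
    [PreconnectedSpace α] [LinearOrder β] [TopologicalSpace β] [OrderClosedTopology β]
    {f : α → β} (hf : StrictMono f) (hcont : Continuous f) {a b : α} {c : β}
    (ha : f a < c) (hb : c ≤ f b) : ∃! x, a < x ∧ f x = c := by
  obtain ⟨x, rfl⟩ := mem_range_of_exists_le_of_exists_ge hcont ⟨a, ha.le⟩ ⟨b, hb⟩
  exact ⟨x, ⟨hf.lt_iff_lt.mp ha, rfl⟩, fun y hy => hf.injective hy.2⟩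

variable {𝕜 : Type*} [Semiring 𝕜] [LinearOrder 𝕜] [IsStrictOrderedRing 𝕜]
  {f : 𝕜 → 𝕜} {r v i : 𝕜}

theorem strictMono_apply_add_mul_add_self (hf : Monotone f) (hr : 0 ≤ r) (v : 𝕜) :
    StrictMono fun i => f (v + r * i) + i :=
  (hf.comp ((monotone_mul_left_of_nonneg hr).const_add v)).add_strictMono strictMono_id

theorem apply_lt_apply_add_mul_add_self_iff_pos (hf : Monotone f) (hr : 0 ≤ r) :
    f v < f (v + r * i) + i ↔ 0 < i := by
  simpa only [mul_zero, add_zero] using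
    (strictMono_apply_add_mul_add_self hf hr v).lt_iff_lt (a := 0) (b := i)

theorem apply_add_mul_add_self_eq_apply_iff_eq_zero (hf : Monotone f) (hr : 0 ≤ r) :
    f (v + r * i) + i = f v ↔ i = 0 := by
  simpa only [mul_zero, add_zero] using
    (strictMono_apply_add_mul_add_self hf hr v).injective.eq_iff (a := i) (b := 0)

end Monotone

/-- The current through the diode and the shunt of the single-diode model at junction voltage `x`,
that is, the right-hand side of the SDM equation without the output current, with `x` standing for
`V + Rs * I`. -/
noncomputable def junctionCurrent (Io A Gsh x : ℝ) : ℝ :=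
  Io * (Real.exp (x / A) - 1) + Gsh * x

namespace junctionCurrent

variable {Io A Gsh : ℝ}

theorem apply_zero (Io A Gsh : ℝ) : junctionCurrent Io A Gsh 0 = 0 := by
  simp [junctionCurrent]

theorem continuous (Io A Gsh : ℝ) : Continuous (junctionCurrent Io A Gsh) := by
  unfold junctionCurrent
  fun_prop

theorem strictMono (hIo : 0 < Io) (hA : 0 < A) (hGsh : 0 ≤ Gsh) :
    StrictMono (junctionCurrent Io A Gsh) := by
  intro x y hxy
  unfold junctionCurrent
  refine add_lt_add_of_lt_of_le ?_ ?_ <;> gcongr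

theorem tendsto_atTop (hIo : 0 < Io) (hA : 0 < A) (hGsh : 0 ≤ Gsh) :
    Tendsto (junctionCurrent Io A Gsh) atTop atTop := by
  have hdiode : Tendsto (fun x => Io * (Real.exp (x / A) - 1)) atTop atTop :=
    (tendsto_atTop_add_const_right _ (-1)
      (Real.tendsto_exp_atTop.comp (tendsto_id.atTop_div_const hA))).const_mul_atTop hIo
  have hshunt : ∀ᶠ x in atTop, 0 ≤ Gsh * x :=
    (eventually_ge_atTop 0).mono fun _ hx => mul_nonneg hGsh hx
  exact hdiode.atTop_add_zero_eventuallyLE hshunt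

end junctionCurrent

/-- For the SDM solution function the short-circuit current I(0) is strictly
positive, and there exists a unique V_oc > 0 with I(V_oc) = 0. -/
theorem stmt_3 (Iph Io A Rs Gsh : ℝ)
    (hIph : 0 < Iph) (hIo : 0 < Io) (hA : 0 < A) (hRs : 0 < Rs) (hGsh : 0 < Gsh)
    (I : ℝ → ℝ)
    (hI : ∀ V, Iph = Io * (Real.exp ((V + Rs * I V) / A) - 1) + Gsh * (V + Rs * I V) + I V) :
    0 < I 0 ∧ ∃! Voc : ℝ, 0 < Voc ∧ I Voc = 0 := by
  have hsdm : ∀ V, Iph = junctionCurrent Io A Gsh (V + Rs * I V) + I V := hI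
  have hmono := junctionCurrent.strictMono hIo hA hGsh.le
  have hzero : junctionCurrent Io A Gsh 0 < Iph := by rwa [junctionCurrent.apply_zero]
  have hopen (V : ℝ) : I V = 0 ↔ junctionCurrent Io A Gsh V = Iph := by
    rw [hsdm V, eq_comm (b := _ + _),
      apply_add_mul_add_self_eq_apply_iff_eq_zero hmono.monotone hRs.le]
  constructor
  · rwa [← apply_lt_apply_add_mul_add_self_iff_pos hmono.monotone hRs.le, ← hsdm 0]
  · obtain ⟨V, hV⟩ :=
      ((junctionCurrent.tendsto_atTop hIo hA hGsh.le).eventually_ge_atTop Iph).exists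
    simp only [hopen]
    exact existsUnique_gt_and_eq_of_strictMono hmono (junctionCurrent.continuous Io A Gsh) hzero hV
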